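/- For a metric space (X,d) the following are equivalent: (1) (X,d) has asymptotic dimension 0; (2) the identity map id : (X, d_id^ul) → (X, d) is large scale continuous; (3) the identity map id : (X, d) → (X, d_id^ul) is a coarse equivalence. Here d_id^ul is the integral ultrametric induced by the identity map of (X,d). -/

import Mathlib

/-- `d` is a metric on the set `X`. -/
def IsMetricD {X : Type*} (d : X → X → ℝ) : Prop :=
  (∀ x, d x x = 0) ∧ (∀ x y, d x y = 0 → x = y) ∧ (∀ x y, d x y = d y x) ∧
    (∀ x y z, d x z ≤ d x y + d y z)

/-- the ultrametric (strong triangle) inequality. -/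
def IsUltraD {X : Type*} (d : X → X → ℝ) : Prop :=
  ∀ x y z, d x z ≤ max (d x y) (d y z)

/-- There is an `r`-chain joining `a` and `b`. -/
def ChainD {Y : Type*} (d : Y → Y → ℝ) (r : ℝ) (a b : Y) : Prop :=
  ∃ (k : ℕ) (c : ℕ → Y), c 0 = a ∧ c k = b ∧ ∀ i < k, d (c i) (c (i + 1)) < r

/-- asymptotic dimension 0: chains of uniformly bounded gauge are uniformly bounded. -/
def AsDimZeroD {Y : Type*} (d : Y → Y → ℝ) : Prop :=
  ∀ r > (0 : ℝ), ∃ s > (0 : ℝ), ∀ a b : Y, ChainD d r a b → d a b ≤ s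

/-- large scale continuous (uniformly bornologous). -/
def LSCD {X Y : Type*} (dX : X → X → ℝ) (dY : Y → Y → ℝ) (f : X → Y) : Prop :=
  ∀ R > (0 : ℝ), ∃ s > (0 : ℝ), ∀ x y : X, dX x y ≤ R → dY (f x) (f y) ≤ s

/-- uniformly proper. -/
def UnifProperD {X Y : Type*} (dX : X → X → ℝ) (dY : Y → Y → ℝ) (f : X → Y) : Prop :=
  ∀ R > (0 : ℝ), ∃ s > (0 : ℝ), ∀ x y : X, dY (f x) (f y) ≤ R → dX x y ≤ s

/-- coarsely surjective. -/
def CoarselySurjD {X Y : Type*} (dY : Y → Y → ℝ) (f : X → Y) : Prop :=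
  ∃ R > (0 : ℝ), ∀ y : Y, ∃ x : X, dY (f x) y ≤ R

/-- coarse embedding. -/
def CoarseEmbD {X Y : Type*} (dX : X → X → ℝ) (dY : Y → Y → ℝ) (f : X → Y) : Prop :=
  LSCD dX dY f ∧ UnifProperD dX dY f

/-- coarse equivalence. -/
def CoarseEquivD {X Y : Type*} (dX : X → X → ℝ) (dY : Y → Y → ℝ) (f : X → Y) : Prop :=
  LSCD dX dY f ∧ UnifProperD dX dY f ∧ CoarselySurjD dY f

/-- the induced integral ultrametric `d_f^ul`. -/
noncomputable def dulD {X Y : Type*} (d : Y → Y → ℝ) (f : X → Y) (x y : X) : ℝ :=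
  letI := Classical.decEq X
  if x = y then 0 else
    ((sInf {r : ℕ | 1 ≤ r ∧ ChainD d (r : ℝ) (f x) (f y)} : ℕ) : ℝ)

/-- `d` is a metric on the subset `A`. -/
def IsMetricOnD {X : Type*} (d : X → X → ℝ) (A : Set X) : Prop :=
  (∀ x ∈ A, d x x = 0) ∧ (∀ x ∈ A, ∀ y ∈ A, d x y = 0 → x = y) ∧
    (∀ x ∈ A, ∀ y ∈ A, d x y = d y x) ∧
    (∀ x ∈ A, ∀ y ∈ A, ∀ z ∈ A, d x z ≤ d x y + d y z)

/-- the ultrametric inequality on a subset. -/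
def IsUltraOnD {X : Type*} (d : X → X → ℝ) (A : Set X) : Prop :=
  ∀ x ∈ A, ∀ y ∈ A, ∀ z ∈ A, d x z ≤ max (d x y) (d y z)

/-- every triangle is isosceles. -/
def IsoscelesD {X : Type*} (d : X → X → ℝ) : Prop :=
  ∀ x y z : X, d x y = d y z ∨ d x y = d x z ∨ d y z = d x z

/-- every triangle with vertices in `A` is isosceles. -/
def IsoscelesOnD {X : Type*} (d : X → X → ℝ) (A : Set X) : Prop :=
  ∀ x ∈ A, ∀ y ∈ A, ∀ z ∈ A, d x y = d y z ∨ d x y = d x z ∨ d y z = d x z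

/-- a set is bounded with respect to the distance function `d`. -/
def BoundedD {X : Type*} (d : X → X → ℝ) (A : Set X) : Prop :=
  ∃ C : ℝ, ∀ x ∈ A, ∀ y ∈ A, d x y ≤ C

/-- `d` makes the disjoint union `Σ s, X s` a coarse disjoint union of the family
of metrics `ds`. -/
def IsCoarseDisjointUnion {S : Type*} {X : S → Type*} (ds : ∀ s, X s → X s → ℝ)
    (d : (Σ s, X s) → (Σ s, X s) → ℝ) : Prop :=
  (∀ (s : S) (x y : X s), d ⟨s, x⟩ ⟨s, y⟩ = ds s x y) ∧
    ∀ M > (0 : ℝ), ∃ B : ∀ s, Set (X s),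
      (∀ s, BoundedD (ds s) (B s)) ∧ {s | (B s).Nonempty}.Finite ∧
      ∀ (s t : S) (x : X s) (y : X t), s ≠ t → x ∉ B s → y ∉ B t → d ⟨s, x⟩ ⟨t, y⟩ > M

/-!
For `n ≥ 1`, `d_f^ul (x, y) ≤ n` holds exactly when `f x` and `f y` are joined by an `n`-chain, so
large scale continuity of `id : (X, d_id^ul) → (X, d)` is asymptotic dimension 0 tested on integral
gauges. In the opposite direction `id` is always large scale continuous, because two points at
distance less than `n` already form an `n`-chain, and its uniform properness is by definition the
large scale continuity of its inverse.
-/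

section

variable {X Y : Type*} {d : Y → Y → ℝ} {f : X → Y}

namespace ChainD

variable {r s : ℝ} {a b : Y}

theorem refl (d : Y → Y → ℝ) (r : ℝ) (a : Y) : ChainD d r a a :=
  ⟨0, fun _ => a, rfl, rfl, fun _ hi => absurd hi (Nat.not_lt_zero _)⟩

theorem of_lt (h : d a b < r) : ChainD d r a b := by
  refine ⟨1, fun i => if i = 0 then a else b, if_pos rfl, if_neg one_ne_zero, fun i hi => ?_⟩
  obtain rfl := Nat.lt_one_iff.mp hi
  simpa using h

theorem mono (hrs : r ≤ s) : ChainD d r a b → ChainD d s a b :=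
  fun ⟨k, c, hc₀, hck, hc⟩ => ⟨k, c, hc₀, hck, fun i hi => (hc i hi).trans_le hrs⟩

theorem exists_nat (d : Y → Y → ℝ) (a b : Y) : ∃ n : ℕ, 1 ≤ n ∧ ChainD d n a b := by
  obtain ⟨n, hn⟩ := exists_nat_gt (d a b)
  exact ⟨n + 1, n.succ_pos, of_lt (hn.trans (by exact_mod_cast n.lt_succ_self))⟩

end ChainD

theorem dulD_self (d : Y → Y → ℝ) (f : X → Y) (x : X) : dulD d f x x = 0 :=
  if_pos rfl

theorem dulD_of_ne {x y : X} (hxy : x ≠ y) :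
    dulD d f x y = (sInf {r : ℕ | 1 ≤ r ∧ ChainD d r (f x) (f y)} : ℕ) :=
  if_neg hxy

theorem dulD_le_natCast_iff {x y : X} {n : ℕ} (hn : 1 ≤ n) :
    dulD d f x y ≤ n ↔ ChainD d n (f x) (f y) := by
  rcases eq_or_ne x y with rfl | hxy
  · exact iff_of_true ((dulD_self d f x).trans_le n.cast_nonneg) (.refl d n (f x))
  · rw [dulD_of_ne hxy]
    constructor
    · exact (Nat.sInf_mem (ChainD.exists_nat d (f x) (f y))).2.mono
    · exact fun hchain => Nat.cast_le.mpr (Nat.sInf_le ⟨hn, hchain⟩)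

theorem AsDimZeroD.lscd_dulD (h : AsDimZeroD d) (f : X → Y) : LSCD (dulD d f) d f := by
  intro R hR
  obtain ⟨n, hRn⟩ := exists_nat_gt R
  have hn : (0 : ℝ) < n := hR.trans hRn
  obtain ⟨s, hs, hbound⟩ := h n hn
  refine ⟨s, hs, fun x y hxy => hbound (f x) (f y) ?_⟩
  exact (dulD_le_natCast_iff (Nat.cast_pos.mp hn)).mp (hxy.trans hRn.le)

theorem asDimZeroD_of_lscd_dulD (hf : f.Surjective) (h : LSCD (dulD d f) d f) :
    AsDimZeroD d := by
  intro r hr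
  obtain ⟨n, hrn⟩ := exists_nat_gt r
  have hn : (0 : ℝ) < n := hr.trans hrn
  obtain ⟨s, hs, hbound⟩ := h n hn
  refine ⟨s, hs, hf.forall₂.mpr fun x y hchain => hbound x y ?_⟩
  exact (dulD_le_natCast_iff (Nat.cast_pos.mp hn)).mpr (hchain.mono hrn.le)

theorem lscd_dulD_id (d : Y → Y → ℝ) (f : X → Y) :
    LSCD (fun x y => d (f x) (f y)) (dulD d f) id := by
  intro R hR
  obtain ⟨n, hRn⟩ := exists_nat_gt R
  have hn : (0 : ℝ) < n := hR.trans hRn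
  refine ⟨n, hn, fun x y hxy => ?_⟩
  exact (dulD_le_natCast_iff (Nat.cast_pos.mp hn)).mpr (.of_lt (hxy.trans_lt hRn))

theorem coarselySurjD_dulD_id (d : Y → Y → ℝ) (f : X → Y) : CoarselySurjD (dulD d f) id :=
  ⟨1, one_pos, fun x => ⟨x, (dulD_self d f x).trans_le zero_le_one⟩⟩

end

theorem asdim_zero_iff_dul_id_general {X : Type*} (d : X → X → ℝ) :
    (AsDimZeroD d ↔ LSCD (dulD d id) d id) ∧
      (AsDimZeroD d ↔ CoarseEquivD d (dulD d id) id) := by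
  have asDimZero_iff_lsc : AsDimZeroD d ↔ LSCD (dulD d id) d id :=
    ⟨fun h => h.lscd_dulD id, asDimZeroD_of_lscd_dulD Function.surjective_id⟩
  have lsc_iff_coarseEquiv : LSCD (dulD d id) d id ↔ CoarseEquivD d (dulD d id) id :=
    ⟨fun h => ⟨lscd_dulD_id d id, h, coarselySurjD_dulD_id d id⟩, fun h => h.2.1⟩
  exact ⟨asDimZero_iff_lsc, asDimZero_iff_lsc.trans lsc_iff_coarseEquiv⟩

/-- For a metric space `(X, d)` the following are equivalent:
(1) `(X, d)` has asymptotic dimension 0;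
(2) `id : (X, d_id^ul) → (X, d)` is large scale continuous;
(3) `id : (X, d) → (X, d_id^ul)` is a coarse equivalence. -/
theorem asdim_zero_iff_dul_id
    {X : Type*} [MetricSpace X] :
    (AsDimZeroD (dist : X → X → ℝ) ↔
        LSCD (dulD (dist : X → X → ℝ) (id : X → X)) (dist : X → X → ℝ) (id : X → X)) ∧
    (AsDimZeroD (dist : X → X → ℝ) ↔
        CoarseEquivD (dist : X → X → ℝ) (dulD (dist : X → X → ℝ) (id : X → X)) (id : X → X)) :=
  asdim_zero_iff_dul_id_general dist
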